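/- (Karrass–Magnus–Solitar 1960, torsion criterion) Let A be a type and let w be a nontrivial, cyclically reduced element of FreeGroup A. The one-relator group G = ⟨A | w = 1⟩ has a nontrivial element of finite order if and only if w is a proper power, i.e. there exist r ∈ FreeGroup A and a natural number n ≥ 2 with w = rⁿ. -/

import Mathlib

/-- A word over `A` is cyclically reduced if its first and last letters are not
mutually inverse; an element of the free group is cyclically reduced if its
reduced word is. -/
def FreeGroup.CyclicallyReduced {A : Type*} [DecidableEq A] (w : FreeGroup A) : Prop :=
  ∀ x : A × Bool, w.toWord.head? = some x → w.toWord.getLast? ≠ some (x.1, !x.2)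


universe u

namespace OneRel

/-- No nontrivial element of finite order. -/
def TF (G : Type*) [Group G] : Prop := ∀ (g : G) (k : ℕ), 1 ≤ k → g ^ k = 1 → g = 1

theorem TF.rot {G : Type*} [Group G] (a b : G)
    (h : ∀ k : ℕ, 1 ≤ k → (b * a) ^ k = 1 → b * a = 1) :
    ∀ k : ℕ, 1 ≤ k → (a * b) ^ k = 1 → a * b = 1 := by
  intro k hk e
  have h1 : a * b = a * (b * a) * a⁻¹ := by group
  rw [h1] at e ⊢
  rw [conj_pow, conj_eq_one_iff] at e
  rw [h k hk e]; simp

open Monoid in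
theorem pushout_tf {ι : Type*} [Nonempty ι] {G : ι → Type*} {H : Type*} [∀ i, Group (G i)] [Group H]
    {φ : ∀ i, H →* G i} (hφ : ∀ i, Function.Injective (φ i)) (hG : ∀ i, TF (G i)) :
    TF (PushoutI φ) := by
  classical
  let pr : List (Σ i, G i) → PushoutI φ := fun l => (l.map fun p => PushoutI.of p.1 p.2).prod
  have pr_app : ∀ l m, pr (l ++ m) = pr l * pr m := by intro l m; simp [pr]
  have pr_cons : ∀ p m, pr (p :: m) = PushoutI.of p.1 p.2 * pr m := by intro l m; simp [pr]
  have key : ∀ n : ℕ, ∀ l : List (Σ i, G i), l.length = n →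
      ∀ k : ℕ, 1 ≤ k → pr l ^ k = 1 → pr l = 1 := by
    intro n
    induction n using Nat.strong_induction_on with
    | _ n ih =>
    intro l hl
    -- merging two adjacent letters
    have merge : ∀ l1 (i : ι) (a b : G i) l2, l = l1 ++ ⟨i, a⟩ :: ⟨i, b⟩ :: l2 →
        ∀ k : ℕ, 1 ≤ k → pr l ^ k = 1 → pr l = 1 := by
      intro l1 i a b l2 e
      have : pr l = pr (l1 ++ ⟨i, a * b⟩ :: l2) := by
        rw [e]; simp [pr_app, pr_cons, mul_assoc]
      rw [this]
      apply ih _ _ _ rfl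
      rw [← hl, e]; simp
    by_cases h2 : n < 2
    · match l, hl with
      | [], _ => intro k _ _; simp [pr]
      | [p], _ =>
        intro k hk e
        simp only [pr, List.map_cons, List.map_nil, List.prod_cons, List.prod_nil, mul_one] at e ⊢
        rw [← map_pow] at e
        have := PushoutI.of_injective hφ p.1 (e.trans (map_one _).symm)
        rw [hG _ _ _ hk this, map_one]
      | _ :: _ :: _, h => simp at h; omega
    push Not at h2
    by_cases hb : ∃ p ∈ l, p.2 ∈ (φ p.1).range
    · obtain ⟨p, hp, ⟨h, hh⟩⟩ := hb
      obtain ⟨l1, l2, e⟩ := List.append_of_mem hp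
      rw [e, pr_app]
      apply TF.rot
      rw [← pr_app]
      match hm : l2 ++ l1 with
      | [] =>
        simp at hm; rw [e, hm.1, hm.2] at hl; simp at hl; omega
      | q :: m =>
        have : pr (p :: l2 ++ l1) = pr (⟨q.1, φ q.1 h * q.2⟩ :: m) := by
          rw [List.cons_append, hm, pr_cons, pr_cons, pr_cons, ← hh, map_mul,
            PushoutI.of_apply_eq_base, PushoutI.of_apply_eq_base, mul_assoc]
        rw [this]
        apply ih _ _ _ rfl
        have h3 := congrArg List.length hm
        have h4 := congrArg List.length e
        simp at h3 h4 ⊢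
        omega
    push Not at hb
    by_cases hc : l.IsChain fun a b => a.1 ≠ b.1
    swap
    · rw [List.isChain_iff_forall_rel_of_append_cons_cons] at hc
      push Not at hc
      obtain ⟨⟨i, a⟩, ⟨j, b⟩, l1, l2, e, hij⟩ := hc
      obtain rfl : i = j := hij
      exact merge _ _ _ _ _ e
    by_cases hf : ∀ a ∈ l.getLast?, ∀ b ∈ l.head?, a.1 ≠ b.1
    swap
    · push Not at hf
      obtain ⟨⟨i, a⟩, ha, ⟨j, b⟩, hb', hij⟩ := hf
      obtain rfl : i = j := hij
      obtain ⟨m, rfl⟩ : ∃ m, l = m ++ [⟨i, a⟩] := by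
        obtain ⟨h, e⟩ := List.mem_getLast?_eq_getLast ha
        exact ⟨l.dropLast, by rw [e]; exact (List.dropLast_append_getLast h).symm⟩
      match m, hl with
      | [], hl => simp at hl; omega
      | c :: m, hl =>
        simp at hb'
        subst hb'
        rw [pr_app]
        apply TF.rot
        have : pr [⟨i, a⟩] * pr (⟨i, b⟩ :: m) = pr (⟨i, a * b⟩ :: m) := by
          simp [pr_cons, pr, mul_assoc]
        rw [this]
        apply ih _ _ _ rfl
        rw [← hl]; simp
    intro k hk e
    exfalso
    have hlne : l ≠ [] := by rintro rfl; simp at hl; omega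
    have hmem : ∀ p ∈ (List.replicate k l).flatten, p ∈ l := by
      intro p hp
      simp at hp
      exact hp.2
    let w : CoprodI.Word G := ⟨(List.replicate k l).flatten, by
        intro p hp h1
        exact hb p (hmem p hp) (h1 ▸ one_mem _), by
        rw [List.isChain_flatten (by simp [hlne.symm])]
        refine ⟨by intro m hm; simp at hm; rw [hm.2]; exact hc,
          List.isChain_replicate_of_rel _ hf⟩⟩
    have hw : PushoutI.Reduced φ w := fun p hp => hb p (hmem p hp)
    have h1 : PushoutI.ofCoprodI w.prod = pr l ^ k := by
      have : ∀ m : List (Σ i, G i), PushoutI.ofCoprodI (φ := φ)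
          (m.map fun l => CoprodI.of l.snd).prod = pr m := by
        intro m
        simp [pr, map_list_prod, Function.comp_def]
      rw [CoprodI.Word.prod, this]
      simp only [w]
      clear this hw w hmem e hk
      induction k with
      | zero => simp [pr]
      | succ k ih => rw [List.replicate_succ, List.flatten_cons, pr_app, ih, pow_succ']
    have := hw.eq_empty_of_mem_range hφ (by rw [h1, e]; exact one_mem _)
    have := congrArg CoprodI.Word.toList this
    simp [w, CoprodI.Word.empty, hlne] at this
    omega
  have surj : ∀ g, ∃ l, pr l = g := by
    intro g
    induction g using PushoutI.induction_on with
    | of i g => exact ⟨[⟨i, g⟩], by simp [pr]⟩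
    | base h =>
      obtain ⟨i⟩ := ‹Nonempty ι›
      exact ⟨[⟨i, φ i h⟩], by simp [pr, PushoutI.of_apply_eq_base]⟩
    | mul x y hx hy =>
      obtain ⟨l, rfl⟩ := hx
      obtain ⟨m, rfl⟩ := hy
      exact ⟨l ++ m, pr_app l m⟩
  intro g k hk e
  obtain ⟨l, rfl⟩ := surj g
  exact key _ l rfl k hk e

/-- The subgroup of the free group generated by a set of letters. -/
def FS {B : Type*} (S : Set B) : Subgroup (FreeGroup B) := Subgroup.closure (FreeGroup.of '' S)

theorem FS_mono {B : Type*} {S T : Set B} (h : S ⊆ T) : FS S ≤ FS T :=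
  Subgroup.closure_mono (Set.image_mono h)

theorem of_mem_FS {B : Type*} {S : Set B} {b : B} (h : b ∈ S) : FreeGroup.of b ∈ FS S :=
  Subgroup.subset_closure ⟨b, h, rfl⟩

/-- The quotient by `N` is torsion-free. -/
def TFN {G : Type*} [Group G] (N : Subgroup G) : Prop :=
  ∀ (g : G) (k : ℕ), 1 ≤ k → g ^ k ∈ N → g ∈ N

open Monoid in
theorem amalg {B : Type*} (S : Bool → Set B) (U : Bool → Set (FreeGroup B)) (T : Set B)
    (hU : ∀ i, U i ⊆ FS (S i)) (hS : ∀ b, ∃ i, b ∈ S i) (hT : ∀ i, T ⊆ S i)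
    (hT' : ∀ i j b, i ≠ j → b ∈ S i → b ∈ S j → b ∈ T)
    (hinj : ∀ i, ∀ g ∈ FS T, g ∈ Subgroup.normalClosure (U i) → g = 1) :
    (∀ i, ∀ g ∈ FS (S i), g ∈ Subgroup.normalClosure (⋃ i, U i) →
      g ∈ Subgroup.normalClosure (U i)) ∧
    ((∀ i, TFN (Subgroup.normalClosure (U i))) → TFN (Subgroup.normalClosure (⋃ i, U i))) := by
  classical
  let N : Bool → Subgroup (FreeGroup B) := fun i => Subgroup.normalClosure (U i)
  let G : Bool → Type _ := fun i => ↥((FS (S i)).map (QuotientGroup.mk' (N i)))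
  let inn : ∀ i, ∀ g ∈ FS (S i), G i := fun i g hg =>
    ⟨QuotientGroup.mk' (N i) g, Subgroup.mem_map_of_mem _ hg⟩
  let φ : ∀ i, FS T →* G i := fun i =>
    ((QuotientGroup.mk' (N i)).comp (FS T).subtype).codRestrict _
      (fun g => Subgroup.mem_map_of_mem _ (FS_mono (hT i) g.2))
  have hφ : ∀ i, Function.Injective (φ i) := by
    intro i
    rw [injective_iff_map_eq_one]
    intro g hg
    have h1 : QuotientGroup.mk' (N i) g.1 = 1 := congrArg Subtype.val hg
    rw [← MonoidHom.mem_ker, QuotientGroup.ker_mk'] at h1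
    exact Subtype.ext (hinj i g.1 g.2 h1)
  choose c hc using hS
  let ψ : FreeGroup B →* PushoutI φ :=
    FreeGroup.lift fun b => PushoutI.of (c b) (inn (c b) (FreeGroup.of b) (of_mem_FS (hc b)))
  have hψ : ∀ i g (hg : g ∈ FS (S i)), ψ g = PushoutI.of i (inn i g hg) := by
    intro i g hg
    induction hg using Subgroup.closure_induction with
    | mem x hx =>
      obtain ⟨b, hb, rfl⟩ := hx
      simp only [ψ, FreeGroup.lift_apply_of]
      by_cases hi : c b = i
      · subst hi; rfl
      · have hbT := hT' _ _ b hi (hc b) hb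
        have := fun j => PushoutI.of_apply_eq_base φ j ⟨FreeGroup.of b, of_mem_FS hbT⟩
        exact (this (c b)).trans (this i).symm
    | one => rw [map_one]; exact (map_one _).symm
    | mul x y hx hy ihx ihy =>
      rw [map_mul, ihx, ihy, ← map_mul]; rfl
    | inv x hx ih =>
      rw [map_inv, ih, ← map_inv]; rfl
  have hinn : ∀ i g hg, inn i g hg = 1 ↔ g ∈ N i := by
    intro i g hg
    have h0 : QuotientGroup.mk' (N i) g = 1 ↔ g ∈ N i := QuotientGroup.eq_one_iff g
    rw [← h0]
    exact ⟨fun h => congrArg Subtype.val h, fun h => Subtype.ext h⟩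
  have hker : Subgroup.normalClosure (⋃ i, U i) ≤ ψ.ker := by
    apply Subgroup.normalClosure_le_normal
    intro u hu
    obtain ⟨i, hi⟩ := Set.mem_iUnion.1 hu
    show ψ u = 1
    rw [hψ i u (hU i hi), (hinn i u (hU i hi)).2 (Subgroup.subset_normalClosure hi), map_one]
  refine ⟨?_, ?_⟩
  · intro i g hg hgN
    have h1 : ψ g = 1 := hker hgN
    rw [hψ i g hg] at h1
    exact (hinn i g hg).1 (PushoutI.of_injective hφ i (h1.trans (map_one _).symm))
  · intro htf g k hk hgk
    have hM : TF (PushoutI φ) := by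
      apply pushout_tf hφ
      rintro i ⟨g, hg⟩ k hk e
      obtain ⟨g, hg', rfl⟩ := hg
      have := (hinn i (g ^ k) (pow_mem hg' k)).1 e
      exact (hinn i g hg').2 (htf i g k hk this)
    have h1 : ψ g = 1 := hM _ k hk (by rw [← map_pow]; exact hker hgk)
    let N' := Subgroup.normalClosure (⋃ i, U i)
    have hle : ∀ i, N i ≤ N' := fun i => Subgroup.normalClosure_mono (Set.subset_iUnion U i)
    let back : PushoutI φ →* FreeGroup B ⧸ N' :=
      PushoutI.lift (fun i => (QuotientGroup.map (N i) N' (MonoidHom.id _) (hle i)).comp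
        (Subgroup.subtype _)) ((QuotientGroup.mk' N').comp (FS T).subtype) (by
          intro i; rfl)
    have hb : back.comp ψ = QuotientGroup.mk' N' := by
      ext b
      simp only [MonoidHom.comp_apply, ψ, FreeGroup.lift_apply_of, back]
      rfl
    have := DFunLike.congr_fun hb g
    rw [MonoidHom.comp_apply, h1, map_one] at this
    have := this.symm
    rwa [← MonoidHom.mem_ker, QuotientGroup.ker_mk'] at this

/-- Staggered families of relators, indexed by a finite set. -/
theorem staggered {B : Type*} {ι : Type*} [LinearOrder ι] (w : ι → FreeGroup B)
    (Lo Hi Hi' : ι → Set B)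
    (h1 : ∀ q, w q ∈ FS (Hi q)) (h2 : ∀ p q, p < q → w p ∈ FS (Lo q))
    (h3 : ∀ q b, b ∈ Lo q ∨ b ∈ Hi q) (h4 : ∀ p q, p < q → Hi q ⊆ Hi' p)
    (h4' : ∀ q, Hi' q ⊆ Hi q)
    (h5 : ∀ q, ∀ g ∈ FS (Lo q), g ∈ Subgroup.normalClosure {w q} → g = 1)
    (h6 : ∀ q, ∀ g ∈ FS (Hi' q), g ∈ Subgroup.normalClosure {w q} → g = 1)
    (s : Finset ι) :
    (∀ Z : Set B, (∀ q ∈ s, Z ⊆ Lo q ∨ Z ⊆ Hi' q) →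
      ∀ g ∈ FS Z, g ∈ Subgroup.normalClosure (w '' s) → g = 1) ∧
    (∀ q ∈ s, ∀ Z : Set B, Z ⊆ Hi q → (∀ q', q < q' → Z ⊆ Lo q') →
      ∀ g ∈ FS Z, g ∈ Subgroup.normalClosure (w '' s) → g ∈ Subgroup.normalClosure {w q}) ∧
    ((∀ q, TFN (Subgroup.normalClosure {w q})) → TFN (Subgroup.normalClosure (w '' s))) := by
  classical
  induction s using Finset.induction_on_max with
  | empty =>
    have : Subgroup.normalClosure (w '' ((∅ : Finset ι) : Set ι)) = ⊥ := by
      simp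
    rw [this]
    refine ⟨fun Z _ g _ h => h, by simp, ?_⟩
    intro _ g k hk h
    rw [Subgroup.mem_bot] at h ⊢
    exact (pow_eq_one_iff_left (by omega)).1 h
  | insert q s hmax ih =>
    obtain ⟨ihA, ihB, ihC⟩ := ih
    have am := amalg (fun i => cond i (Hi q) (Lo q)) (fun i => cond i {w q} (w '' s))
      (Lo q ∩ Hi q)
      (by
        rintro (_ | _)
        · rintro _ ⟨p, hp, rfl⟩
          exact h2 p q (hmax p hp)
        · rintro _ rfl
          exact h1 q)
      (fun b => (h3 q b).elim (fun h => ⟨false, h⟩) (fun h => ⟨true, h⟩))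
      (by
        rintro (_ | _)
        · exact Set.inter_subset_left
        · exact Set.inter_subset_right)
      (by
        rintro (_ | _) (_ | _) b hij hi hj
        · simp at hij
        · exact ⟨hi, hj⟩
        · exact ⟨hj, hi⟩
        · simp at hij)
      (by
        rintro (_ | _) g hg hgN
        · refine ihA (Lo q ∩ Hi q) ?_ g hg hgN
          intro p hp
          exact Or.inr (Set.inter_subset_right.trans (h4 p q (hmax p hp)))
        · exact h5 q g (FS_mono Set.inter_subset_left hg) hgN)
    have hun : (⋃ i, (fun i : Bool => cond i {w q} (w '' s)) i) =
        w '' ((insert q s : Finset ι) : Set ι) := by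
      ext x; simp [Set.mem_iUnion, or_comm, eq_comm]
    rw [hun] at am
    obtain ⟨am1, am2⟩ := am
    have amL := am1 false
    have amR := am1 true
    simp only [cond_true, cond_false] at amL amR
    refine ⟨?_, ?_, ?_⟩
    · intro Z hZ g hg hgN
      rcases hZ q (Finset.mem_insert_self _ _) with h | h
      · exact ihA Z (fun p hp => hZ p (Finset.mem_insert_of_mem hp)) g hg
          (amL g (FS_mono h hg) hgN)
      · exact h6 q g (FS_mono h hg) (amR g (FS_mono (h.trans (h4' q)) hg) hgN)
    · intro p hp Z hZ hZ' g hg hgN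
      rcases Finset.mem_insert.1 hp with rfl | hp
      · exact amR g (FS_mono hZ hg) hgN
      · exact ihB p hp Z hZ hZ' g hg (amL g (FS_mono (hZ' q (hmax p hp)) hg) hgN)
    · intro htf
      apply am2
      rintro (_ | _)
      · exact ihC htf
      · exact htf q

/-- Normal closures are finitary. -/
theorem mem_normalClosure_finite {G ι : Type*} [Group G] [DecidableEq ι] (w : ι → G) (g : G)
    (hg : g ∈ Subgroup.normalClosure (Set.range w)) :
    ∃ s : Finset ι, g ∈ Subgroup.normalClosure (w '' s) := by
  have mono : ∀ s t : Finset ι, s ⊆ t →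
      Subgroup.normalClosure (w '' s) ≤ Subgroup.normalClosure (w '' t) := fun s t h =>
    Subgroup.normalClosure_mono (Set.image_mono (by exact_mod_cast h))
  induction hg using Subgroup.closure_induction with
  | mem x hx =>
    obtain ⟨y, ⟨i, rfl⟩, hy⟩ := Group.mem_conjugatesOfSet_iff.1 hx
    refine ⟨{i}, ?_⟩
    obtain ⟨c, rfl⟩ := isConj_iff.1 hy
    exact Subgroup.normalClosure_normal.conj_mem _ (Subgroup.subset_normalClosure (by simp)) c
  | one => exact ⟨∅, one_mem _⟩
  | mul x y _ _ hx hy =>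
    obtain ⟨s, hs⟩ := hx
    obtain ⟨t, ht⟩ := hy
    exact ⟨s ∪ t, mul_mem (mono _ _ Finset.subset_union_left hs)
      (mono _ _ Finset.subset_union_right ht)⟩
  | inv x _ hx =>
    obtain ⟨s, hs⟩ := hx
    exact ⟨s, inv_mem hs⟩


section Rewriting

/-- Gluing two groups along an infinite cyclic subgroup. -/
theorem exists_glue {G₁ G₂ : Type u} [Group G₁] [Group G₂] (x : G₁) (y : G₂)
    (hx : ∀ n : ℤ, x ^ n = 1 → n = 0) (hy : ∀ n : ℤ, y ^ n = 1 → n = 0) :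
    ∃ (M : Type u) (_ : Group M) (j₁ : G₁ →* M) (j₂ : G₂ →* M),
      Function.Injective j₁ ∧ j₁ x = j₂ y := by
  let φ : Bool → (Multiplicative ℤ →* G₁ × G₂) := fun i =>
    cond i (zpowersHom _ (x, 1)) (zpowersHom _ (1, y))
  have hφ : ∀ i, Function.Injective (φ i) := by
    rintro (_ | _)
    · show Function.Injective (zpowersHom (G₁ × G₂) (1, y))
      rw [injective_iff_map_eq_one]
      intro n hn
      have h1 := congrArg Prod.snd hn
      simp at h1
      exact hy _ h1
    · show Function.Injective (zpowersHom (G₁ × G₂) (x, 1))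
      rw [injective_iff_map_eq_one]
      intro n hn
      have h1 := congrArg Prod.fst hn
      simp at h1
      exact hx _ h1
  refine ⟨Monoid.PushoutI φ, inferInstance,
    (Monoid.PushoutI.of (φ := φ) true).comp (MonoidHom.inl G₁ G₂),
    (Monoid.PushoutI.of (φ := φ) false).comp (MonoidHom.inr G₁ G₂), ?_, ?_⟩
  · intro a b hab
    exact congrArg Prod.fst (Monoid.PushoutI.of_injective hφ true hab)
  · have h1 := Monoid.PushoutI.of_apply_eq_base φ true (Multiplicative.ofAdd 1)
    have h2 := Monoid.PushoutI.of_apply_eq_base φ false (Multiplicative.ofAdd 1)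
    have e1 : φ true (Multiplicative.ofAdd 1) = (x, 1) := by simp [φ]
    have e2 : φ false (Multiplicative.ofAdd 1) = (1, y) := by simp [φ]
    rw [e1] at h1
    rw [e2] at h2
    exact h1.trans h2.symm

variable {A : Type u} [DecidableEq A]

/-- Translation of levels. -/
def shEquiv (A : Type u) (q : ℚ) : A × ℚ ≃ A × ℚ where
  toFun b := (b.1, q + b.2)
  invFun b := (b.1, -q + b.2)
  left_inv b := by simp
  right_inv b := by simp

/-- The action of the rationals on the free group by translation of levels. -/
def sh (A : Type u) : Multiplicative ℚ →* MulAut (FreeGroup (A × ℚ)) where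
  toFun q := FreeGroup.freeGroupCongr (shEquiv A q.toAdd)
  map_one' := by
    apply MulEquiv.toMonoidHom_injective
    ext b
    simp [shEquiv]
  map_mul' p q := by
    apply MulEquiv.toMonoidHom_injective
    ext b
    simp [shEquiv, add_assoc]

@[simp] theorem sh_of (q : Multiplicative ℚ) (b : A × ℚ) :
    sh A q (FreeGroup.of b) = FreeGroup.of (b.1, q.toAdd + b.2) := by
  simp [sh, shEquiv]

/-- The big group. -/
abbrev Big (A : Type u) := FreeGroup (A × ℚ) ⋊[sh A] (Multiplicative ℚ)

/-- The map to the big group determined by the weights `f`, sending `x` to a pure translation. -/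
def th (x : A) (f : A → ℚ) : FreeGroup A →* Big A :=
  FreeGroup.lift fun a => ⟨if a = x then 1 else FreeGroup.of (a, 0), Multiplicative.ofAdd (f a)⟩

theorem exists_emb {G : Type u} [Group G] (x : A) (f : A → ℚ) (hf : f x = 1)
    (h : FreeGroup A →* G) (hx : ∀ n : ℤ, h (FreeGroup.of x) ^ n = 1 → n = 0) :
    ∃ (M : Type u) (_ : Group M) (j : G →* M) (Φ : Big A →* M),
      Function.Injective j ∧ ∀ g, Φ (th x f g) = j (h g) := by
  obtain ⟨M, _, j₁, j₂, hj, e⟩ := exists_glue (G₂ := ULift.{u} (Multiplicative ℚ))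
    (h (FreeGroup.of x)) ⟨Multiplicative.ofAdd 1⟩ hx (by
      intro n hn
      have h1 : (Multiplicative.ofAdd (1 : ℚ)) ^ n = 1 := congrArg ULift.down hn
      have h2 := congrArg Multiplicative.toAdd h1
      simpa using h2)
  let c : Multiplicative ℚ →* M := j₂.comp MulEquiv.ulift.symm.toMonoidHom
  have hc : c (Multiplicative.ofAdd 1) = j₁ (h (FreeGroup.of x)) := e.symm
  let fn : FreeGroup (A × ℚ) →* M := FreeGroup.lift fun b =>
    if b.1 = x then 1 else c (Multiplicative.ofAdd b.2) * j₁ (h (FreeGroup.of b.1)) *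
      (c (Multiplicative.ofAdd (f b.1)))⁻¹ * (c (Multiplicative.ofAdd b.2))⁻¹
  let Φ : Big A →* M := SemidirectProduct.lift fn c (by
    intro q
    ext b
    simp only [MonoidHom.comp_apply, MulEquiv.coe_toMonoidHom, sh_of, fn, FreeGroup.lift_apply_of,
      MulAut.conj_apply]
    split_ifs
    · simp
    · rw [ofAdd_add, map_mul, ofAdd_toAdd]
      group)
  refine ⟨M, inferInstance, j₁, Φ, hj, ?_⟩
  have : Φ.comp (th x f) = j₁.comp h := by
    ext a
    simp only [MonoidHom.comp_apply, th, FreeGroup.lift_apply_of]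
    rw [SemidirectProduct.mk_eq_inl_mul_inr, map_mul]
    simp only [Φ, SemidirectProduct.lift_inl, SemidirectProduct.lift_inr]
    split_ifs with ha
    · subst ha
      rw [hf, hc, map_one, one_mul]
    · simp [fn, ha]
  exact fun g => DFunLike.congr_fun this g

theorem th_injective (x : A) (f : A → ℚ) (hf : f x = 1) : Function.Injective (th x f) := by
  obtain ⟨M, _, j, Φ, hj, h⟩ := exists_emb x f hf (MonoidHom.id (FreeGroup A)) (by
    intro n hn
    by_contra h0
    exact FreeGroup.of_ne_one x ((IsMulTorsionFree.zpow_eq_one_iff_left h0).1 hn))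
  intro a b hab
  apply hj
  have := h a
  rw [hab, h b] at this
  exact this.symm

/-- The normal subgroup generated by all the translates of `ρ`. -/
def Nall (ρ : FreeGroup (A × ℚ)) : Subgroup (FreeGroup (A × ℚ)) :=
  Subgroup.normalClosure (Set.range fun q : ℚ => sh A (Multiplicative.ofAdd q) ρ)

theorem Nall_sh (ρ u : FreeGroup (A × ℚ)) (q : Multiplicative ℚ) (hu : u ∈ Nall ρ) :
    sh A q u ∈ Nall ρ := by
  have : Nall ρ ≤ (Nall ρ).comap (sh A q).toMonoidHom := by
    have : ((Nall ρ).comap (sh A q).toMonoidHom).Normal :=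
      Subgroup.Normal.comap (Subgroup.normalClosure_normal) _
    apply Subgroup.normalClosure_le_normal
    rintro _ ⟨p, rfl⟩
    apply Subgroup.subset_normalClosure
    refine ⟨q.toAdd + p, ?_⟩
    simp only [MulEquiv.coe_toMonoidHom]
    rw [ofAdd_add, map_mul, ofAdd_toAdd]
    rfl
  exact this hu

/-- Relators are mapped into `Nall`. -/
theorem th_mem (x : A) (f : A → ℚ) (w : FreeGroup A) (ρ : FreeGroup (A × ℚ))
    (hw : th x f w = SemidirectProduct.inl ρ) (g : FreeGroup A)
    (hg : g ∈ Subgroup.normalClosure {w}) : ∃ u ∈ Nall ρ, th x f g = SemidirectProduct.inl u := by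
  let P : Subgroup (Big A) := (Nall ρ).map SemidirectProduct.inl
  have hP : P.Normal := by
    constructor
    rintro _ ⟨u, hu, rfl⟩ k
    refine ⟨k.left * sh A k.right u * k.left⁻¹, ?_, ?_⟩
    · exact Subgroup.normalClosure_normal.conj_mem _ (Nall_sh ρ u _ hu) _
    · ext <;> simp
  have : Subgroup.normalClosure {w} ≤ P.comap (th x f) := by
    apply Subgroup.normalClosure_le_normal
    rintro _ rfl
    refine ⟨ρ, Subgroup.subset_normalClosure ⟨0, by simp⟩, hw.symm⟩
  obtain ⟨u, hu, e⟩ := this hg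
  exact ⟨u, hu, e.symm⟩

/-- Conversely. -/
theorem mem_of_th (x : A) (f : A → ℚ) (hf : f x = 1) (w : FreeGroup A) (ρ : FreeGroup (A × ℚ))
    (hw : th x f w = SemidirectProduct.inl ρ)
    (hx : ∀ n : ℤ, FreeGroup.of x ^ n ∈ Subgroup.normalClosure {w} → n = 0)
    (g : FreeGroup A) (u : FreeGroup (A × ℚ)) (hu : u ∈ Nall ρ)
    (hg : th x f g = SemidirectProduct.inl u) : g ∈ Subgroup.normalClosure {w} := by
  obtain ⟨M, _, j, Φ, hj, h⟩ := exists_emb x f hf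
    (QuotientGroup.mk' (Subgroup.normalClosure {w})) (by
      intro n hn
      apply hx
      rw [← map_zpow] at hn
      exact (QuotientGroup.eq_one_iff _).1 hn)
  have h1 : Nall ρ ≤ (Φ.comp SemidirectProduct.inl).ker := by
    apply Subgroup.normalClosure_le_normal
    rintro _ ⟨q, rfl⟩
    show Φ (SemidirectProduct.inl _) = 1
    rw [SemidirectProduct.inl_aut, ← hw, map_mul, map_mul, h,
      show QuotientGroup.mk' (Subgroup.normalClosure {w}) w = 1 from
        (QuotientGroup.eq_one_iff _).2 (Subgroup.subset_normalClosure rfl), map_one, mul_one,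
      ← map_mul, ← map_mul, mul_inv_cancel, map_one, map_one]
  have h2 : Φ (SemidirectProduct.inl u) = 1 := h1 hu
  rw [← hg, h] at h2
  exact (QuotientGroup.eq_one_iff _).1 (hj (h2.trans (map_one j).symm))

end Rewriting


section Words

variable {A : Type u} [DecidableEq A]

/-- Weight of a letter. -/
def lw (f : A → ℚ) (l : A × Bool) : ℚ := if l.2 then f l.1 else - f l.1

/-- Weight of a word. -/
def wt (f : A → ℚ) : List (A × Bool) → ℚ
  | [] => 0
  | l :: L => lw f l + wt f L

/-- The rewritten letter, starting from level `s`. -/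
def rl (f : A → ℚ) (s : ℚ) (l : A × Bool) : (A × ℚ) × Bool :=
  ((l.1, if l.2 then s else s - f l.1), l.2)

/-- The rewritten word, starting from level `s`. -/
def rwl (x : A) (f : A → ℚ) : ℚ → List (A × Bool) → List ((A × ℚ) × Bool)
  | _, [] => []
  | s, l :: L => if l.1 = x then rwl x f (s + lw f l) L else rl f s l :: rwl x f (s + lw f l) L

theorem wt_append (f : A → ℚ) (p t : List (A × Bool)) : wt f (p ++ t) = wt f p + wt f t := by
  induction p with
  | nil => simp [wt]
  | cons l p ih => simp [wt, ih, add_assoc]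

theorem rwl_append (x : A) (f : A → ℚ) (s : ℚ) (p t : List (A × Bool)) :
    rwl x f s (p ++ t) = rwl x f s p ++ rwl x f (s + wt f p) t := by
  induction p generalizing s with
  | nil => simp [rwl, wt]
  | cons l p ih =>
    simp only [List.cons_append, rwl, wt, ih]
    split_ifs <;> simp [add_assoc]

theorem sh_symm_of (q : Multiplicative ℚ) (b : A × ℚ) :
    MulEquiv.symm (sh A q) (FreeGroup.of b) = FreeGroup.of (b.1, -q.toAdd + b.2) :=
  (MulEquiv.symm_apply_eq _).2 (by simp)

theorem th_mk (x : A) (f : A → ℚ) (s : ℚ) (L : List (A × Bool)) :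
    SemidirectProduct.inr (Multiplicative.ofAdd s) * th x f (FreeGroup.mk L) =
      (⟨FreeGroup.mk (rwl x f s L), Multiplicative.ofAdd (s + wt f L)⟩ : Big A) := by
  induction L generalizing s with
  | nil =>
    rw [← FreeGroup.one_eq_mk, map_one]
    simp only [rwl, wt, ← FreeGroup.one_eq_mk]
    ext <;> simp
  | cons l L ih =>
    have h1 : FreeGroup.mk (l :: L) = FreeGroup.mk [l] * FreeGroup.mk L := by
      rw [FreeGroup.mul_mk]; rfl
    have h2 : (SemidirectProduct.inr (Multiplicative.ofAdd s) * th x f (FreeGroup.mk [l]) : Big A) =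
        SemidirectProduct.inl (if l.1 = x then 1 else FreeGroup.mk [rl f s l]) *
          SemidirectProduct.inr (Multiplicative.ofAdd (s + lw f l)) := by
      obtain ⟨a, e⟩ := l
      cases e
      · have : FreeGroup.mk [(a, false)] = (FreeGroup.of a)⁻¹ := rfl
        rw [this, map_inv]
        have h3 : ∀ b : A × ℚ, FreeGroup.mk [(b, false)] = (FreeGroup.of b)⁻¹ := fun _ => rfl
        simp only [th, FreeGroup.lift_apply_of, rl, h3, lw, Bool.false_eq_true, if_false]
        split_ifs
        · ext <;> simp [SemidirectProduct.inv_left, ofAdd_add]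
        · ext <;> simp [SemidirectProduct.inv_left, ofAdd_add, sub_eq_add_neg, sh_symm_of]
      · have h3 : ∀ b : A × ℚ, FreeGroup.mk [(b, true)] = FreeGroup.of b := fun _ => rfl
        have : FreeGroup.mk [(a, true)] = FreeGroup.of a := rfl
        rw [this]
        simp only [th, FreeGroup.lift_apply_of, rl, h3, lw]
        split_ifs
        · ext <;> simp [ofAdd_add]
        · ext <;> simp [ofAdd_add]
    rw [h1, map_mul, ← mul_assoc, h2, mul_assoc, ih]
    simp only [rwl, wt]
    split_ifs
    · ext <;> simp [add_assoc]
    · rw [show FreeGroup.mk (rl f s l :: rwl x f (s + lw f l) L) =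
        FreeGroup.mk [rl f s l] * FreeGroup.mk (rwl x f (s + lw f l) L) by
          rw [FreeGroup.mul_mk]; rfl]
      ext <;> simp [add_assoc]

theorem th_mk_zero (x : A) (f : A → ℚ) (L : List (A × Bool)) :
    th x f (FreeGroup.mk L) =
      (⟨FreeGroup.mk (rwl x f 0 L), Multiplicative.ofAdd (wt f L)⟩ : Big A) := by
  have := th_mk x f 0 L
  rwa [ofAdd_zero, map_one, one_mul, zero_add] at this

theorem th_mk_inl (x : A) (f : A → ℚ) (L : List (A × Bool)) (h : wt f L = 0) :
    th x f (FreeGroup.mk L) = SemidirectProduct.inl (FreeGroup.mk (rwl x f 0 L)) := by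
  rw [th_mk_zero, h]
  rfl

theorem sh_mk (x : A) (f : A → ℚ) (q s : ℚ) (L : List (A × Bool)) :
    sh A (Multiplicative.ofAdd q) (FreeGroup.mk (rwl x f s L)) =
      FreeGroup.mk (rwl x f (q + s) L) := by
  have h : ∀ s, rwl x f (q + s) L =
      (rwl x f s L).map fun b => ((b.1.1, q + b.1.2), b.2) := by
    induction L with
    | nil => simp [rwl]
    | cons l L ih =>
      intro s
      simp only [rwl]
      split_ifs
      · rw [← ih, add_assoc]
      · rw [List.map_cons, ← ih, add_assoc]
        congr 1
        simp only [rl]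
        split_ifs <;> simp [add_sub_assoc]
  rw [h]
  rfl

theorem rwl_split (x : A) (f : A → ℚ) (s : ℚ) (L : List (A × Bool))
    (R₁ R₂ : List ((A × ℚ) × Bool)) (b : (A × ℚ) × Bool) (h : rwl x f s L = R₁ ++ b :: R₂) :
    ∃ p l t, L = p ++ l :: t ∧ rwl x f s p = R₁ ∧ l.1 ≠ x ∧ b = rl f (s + wt f p) l ∧
      rwl x f (s + wt f p + lw f l) t = R₂ := by
  induction L generalizing s R₁ with
  | nil => simp [rwl] at h
  | cons l L ih =>
    simp only [rwl] at h
    split_ifs at h with hl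
    · obtain ⟨p, l', t, h1, h2, h3, h4, h5⟩ := ih _ _ h
      refine ⟨l :: p, l', t, by simp [h1], by simp [rwl, hl, h2], h3, ?_, ?_⟩
      · simpa [wt, add_assoc] using h4
      · simpa [wt, add_assoc] using h5
    · cases R₁ with
      | nil =>
        simp only [List.nil_append, List.cons.injEq] at h
        exact ⟨[], l, L, rfl, rfl, hl, by simp [wt, h.1], by simpa [wt] using h.2⟩
      | cons c R₁ =>
        simp only [List.cons_append, List.cons.injEq] at h
        obtain ⟨p, l', t, h1, h2, h3, h4, h5⟩ := ih _ _ h.2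
        refine ⟨l :: p, l', t, by simp [h1], by simp [rwl, hl, h2, h.1], h3, ?_, ?_⟩
        · simpa [wt, add_assoc] using h4
        · simpa [wt, add_assoc] using h5

theorem rwl_mem (x : A) (f : A → ℚ) (s : ℚ) (L : List (A × Bool)) (b : (A × ℚ) × Bool)
    (h : b ∈ rwl x f s L) : b.1.1 ≠ x ∧ ∃ l ∈ L, l.1 = b.1.1 := by
  obtain ⟨R₁, R₂, h⟩ := List.append_of_mem h
  obtain ⟨p, l, t, h1, h2, h3, h4, h5⟩ := rwl_split _ _ _ _ _ _ _ h
  subst h4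
  exact ⟨h3, l, by simp [h1], rfl⟩

theorem rwl_occ (x : A) (f : A → ℚ) (s : ℚ) (L : List (A × Bool)) (l : A × Bool) (h : l ∈ L)
    (hl : l.1 ≠ x) : ∃ b ∈ rwl x f s L, b.1.1 = l.1 := by
  obtain ⟨p, t, rfl⟩ := List.append_of_mem h
  refine ⟨rl f (s + wt f p) l, ?_, rfl⟩
  simp [rwl_append, rwl, hl]

theorem rwl_nil (x : A) (f : A → ℚ) (s : ℚ) (L : List (A × Bool)) (h : rwl x f s L = []) :
    ∀ l ∈ L, l.1 = x := by
  intro l hl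
  by_contra hx
  obtain ⟨b, hb, -⟩ := rwl_occ x f s L l hl hx
  simp [h] at hb

theorem rwl_length (x : A) (f : A → ℚ) (s : ℚ) (L : List (A × Bool)) :
    (rwl x f s L).length ≤ L.length := by
  induction L generalizing s with
  | nil => simp [rwl]
  | cons l L ih =>
    simp only [rwl]
    have := ih (s + lw f l)
    split_ifs <;> simp <;> omega

theorem rwl_length_lt (x : A) (f : A → ℚ) (s : ℚ) (L : List (A × Bool)) (l : A × Bool)
    (h : l ∈ L) (hl : l.1 = x) : (rwl x f s L).length < L.length := by
  obtain ⟨p, t, rfl⟩ := List.append_of_mem h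
  simp only [rwl_append, rwl, hl, if_true, List.length_append, List.length_cons]
  have h1 := rwl_length x f s p
  have h2 := rwl_length x f (s + wt f p + lw f l) t
  omega

theorem block_replicate (x : A) (p : List (A × Bool)) (hp : FreeGroup.IsReduced p)
    (hx : ∀ l ∈ p, l.1 = x) : ∃ n e, p = List.replicate n (x, e) := by
  induction p with
  | nil => exact ⟨0, true, rfl⟩
  | cons l p ih =>
    obtain ⟨n, e, rfl⟩ := ih (hp.infix ⟨[l], [], by simp⟩) fun l hl => hx l (by simp [hl])
    have h1 := hx l (by simp)
    refine ⟨n + 1, l.2, ?_⟩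
    cases n with
    | zero => simp [← h1]
    | succ n =>
      have h2 : l.2 = e := by
        rw [List.replicate_succ, FreeGroup.IsReduced, List.isChain_cons_cons] at hp
        exact hp.1 h1
      subst h2
      rw [List.replicate_succ (n := n + 1), ← h1]

theorem block_nil (x : A) (f : A → ℚ) (hf : f x = 1) (p : List (A × Bool))
    (hp : FreeGroup.IsReduced p) (hx : ∀ l ∈ p, l.1 = x) (h0 : wt f p = 0) : p = [] := by
  obtain ⟨n, e, rfl⟩ := block_replicate x p hp hx
  have : wt f (List.replicate n (x, e)) = n * (if e then 1 else -1) := by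
    clear h0 hx hp
    induction n with
    | zero => simp [wt]
    | succ n ih =>
      rw [List.replicate_succ, wt, ih]
      simp only [lw, hf]
      split_ifs <;> push_cast <;> ring
  rw [this] at h0
  have : n = 0 := by
    cases e <;> simpa using h0
  simp [this]

theorem rwl_reduced (x : A) (f : A → ℚ) (hf : f x = 1) (s : ℚ) (L : List (A × Bool))
    (hL : FreeGroup.IsReduced L) : FreeGroup.IsReduced (rwl x f s L) := by
  rw [FreeGroup.IsReduced, List.isChain_iff_forall_rel_of_append_cons_cons]
  intro b c R₁ R₂ h
  obtain ⟨p, l, t, rfl, h2, h3, rfl, h5⟩ := rwl_split _ _ _ _ _ _ _ h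
  obtain ⟨p', l', t', rfl, h2', h3', rfl, h5'⟩ :=
    rwl_split x f _ t [] R₂ c (by simpa using h5)
  intro hbc
  by_contra hne
  have hp' := rwl_nil _ _ _ _ h2'
  have hw : wt f p' = 0 := by
    simp only [rl, lw, Prod.mk.injEq] at hbc hne
    obtain ⟨h6, h7⟩ := hbc
    rw [← h6] at h7
    revert h7 hne
    cases l.2 <;> cases l'.2 <;> simp <;> intro h7 <;> linarith
  have := block_nil x f hf p' (hL.infix ⟨p ++ [l], l' :: t', by simp⟩) hp' hw
  subst this
  have h8 : FreeGroup.IsReduced [l, l'] := hL.infix ⟨p, t', by simp⟩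
  simp only [FreeGroup.IsReduced, List.isChain_cons_cons] at h8
  have h9 := congrArg Prod.fst hbc
  exact hne (h8.1 h9)

theorem cyc_sq {B : Type u} (L : List (B × Bool)) (h : FreeGroup.IsCyclicallyReduced L) :
    FreeGroup.IsReduced (L ++ L) := by
  have := (h.flatten_replicate 2).1
  simpa [List.replicate_succ] using this

theorem cyc_of_sq {B : Type u} (L : List (B × Bool)) (h : FreeGroup.IsReduced (L ++ L)) :
    FreeGroup.IsCyclicallyReduced L := by
  refine ⟨h.infix ⟨[], L, by simp⟩, ?_⟩
  rw [FreeGroup.IsReduced, List.isChain_append] at h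
  exact h.2.2

theorem rwl_cyc (x : A) (f : A → ℚ) (hf : f x = 1) (s : ℚ) (L : List (A × Bool))
    (hL : FreeGroup.IsCyclicallyReduced L) (h0 : wt f L = 0) :
    FreeGroup.IsCyclicallyReduced (rwl x f s L) := by
  apply cyc_of_sq
  have := rwl_reduced x f hf s _ (cyc_sq L hL)
  rwa [rwl_append, h0, add_zero] at this

theorem root_word {B : Type u} [DecidableEq B] (R : List (B × Bool))
    (hR : FreeGroup.IsCyclicallyReduced R)
    (r : FreeGroup B) (n : ℕ) (hn : n ≠ 0) (h : FreeGroup.mk R = r ^ n) :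
    R = (List.replicate n r.toWord).flatten := by
  have h1 := congrArg FreeGroup.toWord h
  rw [FreeGroup.toWord_mk, hR.1.reduce_eq, FreeGroup.toWord_pow,
    FreeGroup.reduceCyclically.reduce_flatten_replicate FreeGroup.isReduced_toWord, if_neg hn] at h1
  have h2 : FreeGroup.reduceCyclically.conjugator r.toWord = [] := by
    cases hc : FreeGroup.reduceCyclically.conjugator r.toWord with
    | nil => rfl
    | cons c cs =>
      exfalso
      rw [hc] at h1
      have h3 : (c.1, !c.2) ∈ R.getLast? := by
        rw [h1, FreeGroup.invRev, List.map_cons, List.reverse_cons, ← List.append_assoc]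
        exact List.getLast?_concat
      have h4 : c ∈ R.head? := by simp [h1]
      have := hR.2 _ h3 _ h4 rfl
      simp at this
  have h3 := FreeGroup.reduceCyclically.conj_conjugator_reduceCyclically r.toWord
  rw [h2] at h1 h3
  simp at h1 h3
  rw [h1, h3]

theorem rwl_root_zero (x : A) (f : A → ℚ) (hf : f x = 1) (L : List (A × Bool))
    (hL : FreeGroup.IsCyclicallyReduced L) (h0 : wt f L = 0) (hne : rwl x f 0 L ≠ [])
    (r : FreeGroup (A × ℚ)) (n : ℕ) (hn : 2 ≤ n) (h : FreeGroup.mk (rwl x f 0 L) = r ^ n) :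
    ∃ r', FreeGroup.mk L = r' ^ n := by
  have h1 := root_word _ (rwl_cyc x f hf 0 L hL h0) r n (by omega) h
  obtain ⟨n, rfl⟩ := Nat.exists_eq_add_of_le' hn
  rw [List.replicate_succ, List.replicate_succ, List.flatten_cons, List.flatten_cons] at h1
  cases hW : r.toWord with
  | nil =>
    rw [hW] at h1
    simp at h1
    exact absurd h1 hne
  | cons b W =>
    have h2 : rwl x f 0 L =
      [] ++ b :: (W ++ (r.toWord ++ (List.replicate n r.toWord).flatten)) := by
        rw [h1, hW]; simp
    have h3 : rwl x f 0 L =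
      r.toWord ++ b :: (W ++ (List.replicate n r.toWord).flatten) := by
        rw [h1, hW]; simp
    obtain ⟨p, l, t, e1, e2, e3, e4, e5⟩ := rwl_split _ _ _ _ _ _ _ h2
    obtain ⟨p', l', t', e1', e2', e3', e4', e5'⟩ := rwl_split _ _ _ _ _ _ _ h3
    have hw : wt f p = wt f p' := by
      rw [e4] at e4'
      simp only [rl, Prod.mk.injEq, zero_add] at e4'
      obtain ⟨⟨e6, e7⟩, e8⟩ := e4'
      rw [e6, e8] at e7
      split_ifs at e7
      · exact e7
      · linarith
    refine ⟨FreeGroup.mk p' * (FreeGroup.mk p)⁻¹, ?_⟩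
    apply th_injective x f hf
    have h4 : th x f (FreeGroup.mk p' * (FreeGroup.mk p)⁻¹) = SemidirectProduct.inl r := by
      rw [map_mul, map_inv, th_mk_zero, th_mk_zero, e2, e2', ← hw, ← FreeGroup.one_eq_mk,
        FreeGroup.mk_toWord, mul_inv_eq_iff_eq_mul]
      ext <;> simp
    rw [map_pow, h4, th_mk_inl x f L h0, h, map_pow]

theorem rwl_root (x : A) (f : A → ℚ) (hf : f x = 1) (q : ℚ) (L : List (A × Bool))
    (hL : FreeGroup.IsCyclicallyReduced L) (h0 : wt f L = 0) (hne : rwl x f 0 L ≠ [])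
    (r : FreeGroup (A × ℚ)) (n : ℕ) (hn : 2 ≤ n) (h : FreeGroup.mk (rwl x f q L) = r ^ n) :
    ∃ r', FreeGroup.mk L = r' ^ n := by
  apply rwl_root_zero x f hf L hL h0 hne (sh A (Multiplicative.ofAdd (-q)) r) n hn
  rw [← map_pow, ← h, sh_mk, neg_add_cancel]

theorem levels_aux (x : A) (f : A → ℚ) (hf : f x = 1) (hf' : ∀ a, a ≠ x → f a = 0) (s : ℚ)
    (Q : List (A × Bool)) (a a' : A × Bool) (ha : a.1 ≠ x) (ha' : a'.1 ≠ x)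
    (hr : FreeGroup.IsReduced (a :: (Q ++ [a'])))
    (h : ∀ b ∈ rwl x f s (a :: (Q ++ [a'])), b.1.2 = s) : ∀ l ∈ Q, l.1 ≠ x := by
  induction Q generalizing a with
  | nil => simp
  | cons l Q ih =>
    have hlw : lw f a = 0 := by simp [lw, hf' _ ha]
    rw [rwl, if_neg ha, hlw, add_zero] at h
    by_cases hl : l.1 = x
    · exfalso
      cases hc : rwl x f s (l :: Q ++ [a']) with
      | nil => exact ha' (rwl_nil _ _ _ _ hc a' (by simp))
      | cons b R =>
        obtain ⟨p, m, t, e1, e2, e3, e4, e5⟩ := rwl_split x f s _ [] R b (by simpa using hc)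
        have h1 : b.1.2 = s := h b (List.mem_cons_of_mem _ (by rw [hc]; exact List.mem_cons_self))
        have h2 : wt f p = 0 := by
          rw [e4] at h1
          simpa [rl, hf' _ e3] using h1
        have h3 := block_nil x f hf p
          (hr.infix ⟨[a], m :: t, by simpa using e1.symm⟩) (rwl_nil _ _ _ _ e2) h2
        subst h3
        simp only [List.cons_append, List.nil_append, List.cons.injEq] at e1
        exact e3 (e1.1 ▸ hl)
    · intro m hm
      rcases List.mem_cons.1 hm with rfl | hm
      · exact hl
      · exact ih l hl (hr.infix ⟨[a], [], by simp⟩) (fun b hb => h b (by simp; right; simpa using hb)) m hm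

theorem two_levels (x : A) (f : A → ℚ) (hf : f x = 1) (hf' : ∀ a, a ≠ x → f a = 0)
    (L : List (A × Bool)) (hL : FreeGroup.IsCyclicallyReduced L) (h0 : wt f L = 0)
    (hx : ∃ l ∈ L, l.1 = x) (hy : ∃ l ∈ L, l.1 ≠ x) :
    ∃ b ∈ rwl x f 0 L, ∃ c ∈ rwl x f 0 L, b.1.2 ≠ c.1.2 := by
  by_contra! hcon
  obtain ⟨a, ha, hax⟩ := hy
  obtain ⟨l, hl, hlx⟩ := hx
  obtain ⟨P, Q, rfl⟩ := List.append_of_mem ha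
  have h1 := cyc_sq _ hL
  have h2 : FreeGroup.IsReduced (a :: ((Q ++ P) ++ [a])) := h1.infix ⟨P, Q, by simp⟩
  have hlw : lw f a = 0 := by simp [lw, hf' _ hax]
  have h3 : rl f (wt f P) a ∈ rwl x f 0 (P ++ a :: Q) := by
    simp [rwl_append, rwl, hax]
  refine levels_aux x f hf hf' (wt f P) (Q ++ P) a a hax hax h2 ?_ l ?_ hlx
  · intro b hb
    have h4 : b ∈ rwl x f 0 (P ++ a :: Q) := by
      have h5 : b ∈ rwl x f 0 ((P ++ a :: Q) ++ (P ++ a :: Q)) := by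
        rw [show (P ++ a :: Q) ++ (P ++ a :: Q) = P ++ ((a :: ((Q ++ P) ++ [a])) ++ Q) by simp,
          rwl_append, rwl_append, zero_add]
        simp only [List.mem_append]
        exact Or.inr (Or.inl hb)
      rw [rwl_append, h0, add_zero] at h5
      simpa using h5
    have := hcon _ h4 _ h3
    rw [this]
    simp [rl, hf' _ hax]
  · have : l ≠ a := fun h => hax (h ▸ hlx)
    simp [this] at hl
    simp
    tauto

theorem mk_mem_FS {B : Type u} (S : Set B) (R : List (B × Bool)) (h : ∀ b ∈ R, b.1 ∈ S) :
    FreeGroup.mk R ∈ FS S := by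
  induction R with
  | nil => exact one_mem _
  | cons b R ih =>
    rw [show FreeGroup.mk (b :: R) = FreeGroup.mk [b] * FreeGroup.mk R by
      rw [FreeGroup.mul_mk]; rfl]
    refine mul_mem ?_ (ih fun c hc => h c (by simp [hc]))
    have h1 : FreeGroup.of b.1 ∈ FS S := of_mem_FS (h b (by simp))
    obtain ⟨b, e⟩ := b
    cases e
    · exact inv_mem h1
    · exact h1

end Words

section Main

open Subgroup (normalClosure)

/-- The inductive package: Freiheitssatz, torsion-freeness, and order of the root. -/
structure Good {A : Type u} (L : List (A × Bool)) : Prop where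
  F : ∀ b, (∃ l ∈ L, l.1 = b) → ∀ g ∈ FS {a | a ≠ b}, g ∈ normalClosure {FreeGroup.mk L} → g = 1
  T : (¬ ∃ (r : FreeGroup A) (n : ℕ), 2 ≤ n ∧ FreeGroup.mk L = r ^ n) →
    TFN (normalClosure {FreeGroup.mk L})
  O : ∀ (r : FreeGroup A) (n : ℕ), 2 ≤ n → FreeGroup.mk L = r ^ n →
    r ∉ normalClosure {FreeGroup.mk L}

theorem fg_pow_eq_one {B : Type u} (g : FreeGroup B) (k : ℕ) (hk : 1 ≤ k) (h : g ^ k = 1) :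
    g = 1 := by
  have : k ≠ 0 := by omega
  exact (pow_left_injective this (h.trans (one_pow k).symm))

theorem good_base {A : Type u} (x : A) (L : List (A × Bool)) (hL : FreeGroup.IsReduced L)
    (hne : L ≠ []) (hx : ∀ l ∈ L, l.1 = x) : Good L := by
  classical
  obtain ⟨n, e, hLe⟩ := block_replicate x L hL hx
  have hn : n ≠ 0 := by
    rintro rfl
    exact hne hLe
  obtain ⟨d, hd, hmk⟩ : ∃ d : ℤ, (d = 1 ∨ d = -1) ∧
      FreeGroup.mk L = ((FreeGroup.of x) ^ d) ^ n := by
    have h1 : ∀ m, FreeGroup.mk (List.replicate m (x, e)) = (FreeGroup.mk [(x, e)]) ^ m := by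
      intro m
      induction m with
      | zero => rfl
      | succ m ih => rw [pow_succ', ← ih, FreeGroup.mul_mk]; rfl
    rw [hLe, h1]
    cases e
    · exact ⟨-1, Or.inr rfl, by rw [zpow_neg_one]; rfl⟩
    · exact ⟨1, Or.inl rfl, by rw [zpow_one]; rfl⟩
  let ρ : FreeGroup A →* FreeGroup A := FreeGroup.lift fun a => if a = x then 1 else FreeGroup.of a
  have hρ : normalClosure {FreeGroup.mk L} ≤ ρ.ker := by
    apply Subgroup.normalClosure_le_normal
    rintro _ rfl
    show ρ _ = 1
    rw [hmk, map_pow, map_zpow]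
    simp [ρ]
  refine ⟨?_, ?_, ?_⟩
  · rintro b ⟨l, hl, rfl⟩ g hg hgN
    rw [hx l hl] at hg
    have h1 : ρ g = g := by
      clear hgN
      induction hg using Subgroup.closure_induction with
      | mem g hg =>
        obtain ⟨a, ha, rfl⟩ := hg
        have : a ≠ x := ha
        simp [ρ, this]
      | one => simp
      | mul a b _ _ ha hb => rw [map_mul, ha, hb]
      | inv a _ ha => rw [map_inv, ha]
    rw [← h1]
    exact hρ hgN
  · intro hnp g k hk hg
    have hn1 : n = 1 := by
      by_contra h
      exact hnp ⟨_, n, by omega, hmk⟩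
    have h1 : (QuotientGroup.mk' (normalClosure {FreeGroup.mk L})).comp ρ =
        QuotientGroup.mk' (normalClosure {FreeGroup.mk L}) := by
      ext a
      simp only [MonoidHom.comp_apply, ρ, FreeGroup.lift_apply_of]
      split_ifs with h
      · rw [map_one]
        symm
        apply (QuotientGroup.eq_one_iff _).2
        have h2 : FreeGroup.mk L ∈ normalClosure {FreeGroup.mk L} :=
          Subgroup.subset_normalClosure rfl
        have h3 : FreeGroup.of x = FreeGroup.mk L ^ d := by
          rw [hmk, hn1]
          rcases hd with rfl | rfl <;> simp
        rw [h, h3]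
        exact Subgroup.zpow_mem _ h2 _
      · rfl
    have h2 : ρ g = 1 := by
      apply fg_pow_eq_one _ k hk
      rw [← map_pow]
      exact hρ hg
    have h3 := DFunLike.congr_fun h1 g
    rw [MonoidHom.comp_apply, h2, map_one] at h3
    exact (QuotientGroup.eq_one_iff _).1 h3.symm
  · intro r k hk hr hrN
    let φ : FreeGroup A →* Multiplicative ℤ :=
      FreeGroup.lift fun a => if a = x then Multiplicative.ofAdd 1 else 1
    have h1 : normalClosure {FreeGroup.mk L} ≤
        (Subgroup.zpowers (φ (FreeGroup.mk L))).comap φ := by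
      apply Subgroup.normalClosure_le_normal
      rintro _ rfl
      exact Subgroup.mem_zpowers _
    obtain ⟨j, hj⟩ := h1 hrN
    have h2 := congrArg Multiplicative.toAdd hj
    have h3 : φ (FreeGroup.mk L) = φ r ^ k := by rw [hr, map_pow]
    have h4 : (φ (FreeGroup.mk L)).toAdd = n * d := by
      rw [hmk, map_pow, map_zpow]
      simp [φ]
    have h5 : (φ (FreeGroup.mk L)).toAdd = k * (φ r).toAdd := by
      rw [h3]; simp
    have h6 : j * (φ (FreeGroup.mk L)).toAdd = (φ r).toAdd := by
      simpa using h2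
    have h7 : (φ r).toAdd ≠ 0 := by
      intro h0
      rw [h0, h4] at h5
      rcases hd with rfl | rfl <;> simp at h5 <;> exact hn h5
    have h8 : j * k = 1 := by
      rw [h5] at h6
      apply mul_right_cancel₀ h7
      rw [one_mul, mul_assoc]
      exact h6
    have h9 : (k : ℤ) ∣ 1 := ⟨j, by rw [mul_comm]; exact h8.symm⟩
    have := Int.le_of_dvd one_pos h9
    omega

variable {A : Type u} [DecidableEq A]

theorem rwl_shift (x : A) (f : A → ℚ) (q : ℚ) (L : List (A × Bool)) :
    rwl x f q L = (rwl x f 0 L).map fun b => ((b.1.1, q + b.1.2), b.2) := by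
  have h : ∀ s, rwl x f (q + s) L =
      (rwl x f s L).map fun b => ((b.1.1, q + b.1.2), b.2) := by
    induction L with
    | nil => simp [rwl]
    | cons l L ih =>
      intro s
      simp only [rwl]
      split_ifs
      · rw [← ih, add_assoc]
      · rw [List.map_cons, ← ih, add_assoc]
        congr 1
        simp only [rl]
        split_ifs <;> simp [add_sub_assoc]
  have := h 0
  rwa [add_zero] at this

/-- The relators. -/
def rel (x : A) (f : A → ℚ) (L : List (A × Bool)) (q : ℚ) : FreeGroup (A × ℚ) :=
  FreeGroup.mk (rwl x f q L)

theorem Nall_eq (x : A) (f : A → ℚ) (L : List (A × Bool)) :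
    Nall (FreeGroup.mk (rwl x f 0 L)) = normalClosure (Set.range (rel x f L)) := by
  rw [Nall]
  congr 2
  funext q
  rw [sh_mk, add_zero]
  rfl

theorem Nall_fin (x : A) (f : A → ℚ) (L : List (A × Bool)) (u : FreeGroup (A × ℚ))
    (hu : u ∈ Nall (FreeGroup.mk (rwl x f 0 L))) :
    ∃ s : Finset ℚ, u ∈ normalClosure (rel x f L '' s) := by
  rw [Nall_eq] at hu
  exact mem_normalClosure_finite _ _ hu

theorem le_Nall (x : A) (f : A → ℚ) (L : List (A × Bool)) (s : Finset ℚ) :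
    normalClosure (rel x f L '' s) ≤ Nall (FreeGroup.mk (rwl x f 0 L)) := by
  rw [Nall_eq]
  exact Subgroup.normalClosure_mono (Set.image_subset_range _ _)

theorem exists_bounds (x : A) (f : A → ℚ) (L : List (A × Bool)) (Y : Set A)
    (hY : ∃ b ∈ rwl x f 0 L, b.1.1 ∈ Y) : ∃ μ M : ℚ,
      (∃ b ∈ rwl x f 0 L, b.1.1 ∈ Y ∧ b.1.2 = μ) ∧ (∃ b ∈ rwl x f 0 L, b.1.1 ∈ Y ∧ b.1.2 = M) ∧
      ∀ b ∈ rwl x f 0 L, b.1.1 ∈ Y → μ ≤ b.1.2 ∧ b.1.2 ≤ M := by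
  classical
  let S := (rwl x f 0 L).toFinset.filter fun b => b.1.1 ∈ Y
  have hS : S.Nonempty := by
    obtain ⟨b, hb, hbY⟩ := hY
    exact ⟨b, by simp [S, hb, hbY]⟩
  obtain ⟨b, hb, hb'⟩ := S.exists_min_image (fun b => b.1.2) hS
  obtain ⟨c, hc, hc'⟩ := S.exists_max_image (fun b => b.1.2) hS
  simp only [S, Finset.mem_filter, List.mem_toFinset] at hb hb' hc hc'
  exact ⟨b.1.2, c.1.2, ⟨b, hb.1, hb.2, rfl⟩, ⟨c, hc.1, hc.2, rfl⟩,
    fun d hd hdY => ⟨hb' d ⟨hd, hdY⟩, hc' d ⟨hd, hdY⟩⟩⟩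

theorem stag (x : A) (f : A → ℚ) (L : List (A × Bool)) (hG : ∀ q, Good (rwl x f q L))
    (Y : Set A) (μ M : ℚ)
    (hμ : ∃ b ∈ rwl x f 0 L, b.1.1 ∈ Y ∧ b.1.2 = μ)
    (hM : ∃ b ∈ rwl x f 0 L, b.1.1 ∈ Y ∧ b.1.2 = M)
    (hb : ∀ b ∈ rwl x f 0 L, b.1.1 ∈ Y → μ ≤ b.1.2 ∧ b.1.2 ≤ M) (s : Finset ℚ) :
    (∀ Z : Set (A × ℚ), (∀ q ∈ s, Z ⊆ {b | b.1 ∈ Y → b.2 < M + q} ∨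
        Z ⊆ {b | b.1 ∈ Y → μ + q < b.2}) →
      ∀ g ∈ FS Z, g ∈ normalClosure (rel x f L '' s) → g = 1) ∧
    (∀ q ∈ s, ∀ Z ⊆ {b : A × ℚ | b.1 ∈ Y → μ + q ≤ b.2},
      (∀ q', q < q' → Z ⊆ {b | b.1 ∈ Y → b.2 < M + q'}) →
      ∀ g ∈ FS Z, g ∈ normalClosure (rel x f L '' s) → g ∈ normalClosure {rel x f L q}) ∧
    ((∀ q, TFN (normalClosure {rel x f L q})) → TFN (normalClosure (rel x f L '' s))) := by
  have hb' : ∀ q, ∀ b ∈ rwl x f q L, b.1.1 ∈ Y → μ + q ≤ b.1.2 ∧ b.1.2 ≤ M + q := by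
    intro q b hbq hbY
    rw [rwl_shift] at hbq
    obtain ⟨c, hc, rfl⟩ := List.mem_map.1 hbq
    have := hb c hc hbY
    constructor <;> simp only <;> linarith
  have hocc : ∀ q, ∀ b ∈ rwl x f 0 L, ∃ l ∈ rwl x f q L, l.1 = (b.1.1, q + b.1.2) := by
    intro q b hb
    rw [rwl_shift]
    exact ⟨_, List.mem_map_of_mem hb, rfl⟩
  have hle : μ ≤ M := by
    obtain ⟨b, hb1, hb2, rfl⟩ := hμ
    exact (hb b hb1 hb2).2
  apply staggered (rel x f L) (fun q => {b | b.1 ∈ Y → b.2 < M + q})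
    (fun q => {b | b.1 ∈ Y → μ + q ≤ b.2}) (fun q => {b | b.1 ∈ Y → μ + q < b.2})
  · intro q
    exact mk_mem_FS _ _ fun b hb hbY => (hb' q b hb hbY).1
  · intro p q hpq
    exact mk_mem_FS _ _ fun b hb hbY => by linarith [(hb' p b hb hbY).2]
  · intro q b
    by_cases h : b.1 ∈ Y ∧ M + q ≤ b.2
    · right
      intro _
      linarith [h.2]
    · left
      intro h1
      by_contra h2
      exact h ⟨h1, not_lt.1 h2⟩
  · intro p q hpq b hb hbY
    have := hb hbY
    linarith
  · intro q b hb hbY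
    exact (hb hbY).le
  · intro q g hg hgN
    obtain ⟨b, hb1, hb2, hb3⟩ := hM
    refine (hG q).F _ (hocc q b hb1) g (FS_mono ?_ hg) hgN
    rintro c hc rfl
    have := hc hb2
    simp only at this
    linarith
  · intro q g hg hgN
    obtain ⟨b, hb1, hb2, hb3⟩ := hμ
    refine (hG q).F _ (hocc q b hb1) g (FS_mono ?_ hg) hgN
    rintro c hc rfl
    have := hc hb2
    simp only at this
    linarith

theorem sh_FS (Z Z' : Set (A × ℚ)) (q : Multiplicative ℚ)
    (h : ∀ b ∈ Z, (b.1, q.toAdd + b.2) ∈ Z') (u : FreeGroup (A × ℚ)) (hu : u ∈ FS Z) :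
    sh A q u ∈ FS Z' := by
  induction hu using Subgroup.closure_induction with
  | mem g hg =>
    obtain ⟨b, hb, rfl⟩ := hg
    rw [sh_of]
    exact of_mem_FS (h b hb)
  | one => rw [map_one]; exact one_mem _
  | mul a b _ _ ha hb => rw [map_mul]; exact mul_mem ha hb
  | inv a _ ha => rw [map_inv]; exact inv_mem ha

theorem th_left_FS (x : A) (f : A → ℚ) (S : Set A) (g : FreeGroup A) (hg : g ∈ FS S) :
    (th x f g).left ∈ FS {b : A × ℚ | b.1 ∈ S} := by
  induction hg using Subgroup.closure_induction with
  | mem g hg =>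
    obtain ⟨a, ha, rfl⟩ := hg
    simp only [th, FreeGroup.lift_apply_of]
    split_ifs
    · exact one_mem _
    · exact of_mem_FS ha
  | one => rw [map_one]; exact one_mem _
  | mul a b _ _ ha hb =>
    rw [map_mul, SemidirectProduct.mul_left]
    exact mul_mem ha (sh_FS _ _ _ (fun b hb => hb) _ hb)
  | inv a _ ha =>
    rw [map_inv, SemidirectProduct.inv_left]
    exact sh_FS _ _ _ (fun b hb => hb) _ (inv_mem ha)

theorem th_level_zero (y : A) (f : A → ℚ) (hf : ∀ a, a ≠ y → f a = 0) (g : FreeGroup A)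
    (hg : g ∈ FS {a | a ≠ y}) :
    ∃ u ∈ FS {b : A × ℚ | b.2 = 0}, th y f g = SemidirectProduct.inl u := by
  have : FS {a | a ≠ y} ≤ ((FS {b : A × ℚ | b.2 = 0}).map
      (SemidirectProduct.inl : FreeGroup (A × ℚ) →* Big A)).comap (th y f) := by
    rw [FS, Subgroup.closure_le]
    rintro _ ⟨a, ha, rfl⟩
    have ha : a ≠ y := ha
    refine ⟨FreeGroup.of (a, 0), of_mem_FS rfl, ?_⟩
    simp only [th, FreeGroup.lift_apply_of, if_neg ha, hf a ha]
    rfl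
  obtain ⟨u, hu, e⟩ := this hg
  exact ⟨u, hu, e.symm⟩

/-- Freiheitssatz, exponent sum zero case. -/
theorem free_case_zero (y : A) (f : A → ℚ) (hf : f y = 1) (hf' : ∀ a, a ≠ y → f a = 0)
    (L : List (A × Bool)) (hL : FreeGroup.IsCyclicallyReduced L) (h0 : wt f L = 0)
    (hy : ∃ l ∈ L, l.1 = y) (hx : ∃ l ∈ L, l.1 ≠ y) (hG : ∀ q, Good (rwl y f q L))
    (g : FreeGroup A) (hg : g ∈ FS {a | a ≠ y}) (hgN : g ∈ normalClosure {FreeGroup.mk L}) :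
    g = 1 := by
  obtain ⟨b, hb, c, hc, hbc⟩ := two_levels y f hf hf' L hL h0 hy hx
  obtain ⟨μ, M, hμ, hM, hbd⟩ := exists_bounds y f L Set.univ ⟨b, hb, trivial⟩
  have hlt : μ < M := by
    have h1 := hbd b hb trivial
    have h2 := hbd c hc trivial
    by_contra h
    exact hbc (by linarith)
  obtain ⟨u, hu, hgu⟩ := th_mem y f _ _ (th_mk_inl y f L h0) g hgN
  obtain ⟨u', hu', hgu'⟩ := th_level_zero y f hf' g hg
  have : u = u' := SemidirectProduct.inl_injective (hgu.symm.trans hgu')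
  subst this
  obtain ⟨s, hs⟩ := Nall_fin y f L u hu
  have h1 := (stag y f L hG Set.univ μ M hμ hM hbd s).1 {b : A × ℚ | b.2 = 0} ?_ u hu' hs
  · apply th_injective y f hf
    rw [hgu, h1, map_one, map_one]
  · intro q _
    by_cases h : 0 < M + q
    · left
      intro b hb _
      have hb : b.2 = 0 := hb
      rw [hb]
      exact h
    · right
      intro b hb _
      have hb : b.2 = 0 := hb
      rw [hb]
      linarith

/-- Freiheitssatz, general case. -/
theorem free_case (x y : A) (hxy : x ≠ y) (f : A → ℚ) (hf : f x = 1)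
    (L : List (A × Bool)) (h0 : wt f L = 0)
    (hy : ∃ l ∈ L, l.1 = y) (hG : ∀ q, Good (rwl x f q L))
    (g : FreeGroup A) (hg : g ∈ FS {a | a ≠ y}) (hgN : g ∈ normalClosure {FreeGroup.mk L}) :
    g = 1 := by
  obtain ⟨l, hl, hly⟩ := hy
  obtain ⟨b, hb, hbl⟩ := rwl_occ x f 0 L l hl (by rw [hly]; exact hxy.symm)
  obtain ⟨μ, M, hμ, hM, hbd⟩ := exists_bounds x f L {y} ⟨b, hb, hbl.trans hly⟩
  obtain ⟨u, hu, hgu⟩ := th_mem x f _ _ (th_mk_inl x f L h0) g hgN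
  have hu' := th_left_FS x f _ g hg
  rw [hgu, SemidirectProduct.left_inl] at hu'
  obtain ⟨s, hs⟩ := Nall_fin x f L u hu
  have h1 := (stag x f L hG {y} μ M hμ hM hbd s).1 _ ?_ u hu' hs
  · apply th_injective x f hf
    rw [hgu, h1, map_one, map_one]
  · intro q _
    left
    intro b hb hb'
    exact absurd hb' hb

theorem tors_case (x y : A) (hxy : x ≠ y) (f : A → ℚ) (hf : f x = 1)
    (L : List (A × Bool)) (hL : FreeGroup.IsCyclicallyReduced L) (h0 : wt f L = 0)
    (hy : ∃ l ∈ L, l.1 = y) (hG : ∀ q, Good (rwl x f q L))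
    (hF : ∀ g ∈ FS {a | a ≠ y}, g ∈ normalClosure {FreeGroup.mk L} → g = 1) :
    ((¬ ∃ (r : FreeGroup A) (n : ℕ), 2 ≤ n ∧ FreeGroup.mk L = r ^ n) →
      TFN (normalClosure {FreeGroup.mk L})) ∧
    (∀ (r : FreeGroup A) (n : ℕ), 2 ≤ n → FreeGroup.mk L = r ^ n →
      r ∉ normalClosure {FreeGroup.mk L}) := by
  obtain ⟨l, hl, hly⟩ := hy
  obtain ⟨b, hb, hbl⟩ := rwl_occ x f 0 L l hl (by rw [hly]; exact hxy.symm)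
  obtain ⟨μ, M, hμ, hM, hbd⟩ := exists_bounds x f L Set.univ ⟨b, hb, trivial⟩
  have hne : rwl x f 0 L ≠ [] := List.ne_nil_of_mem hb
  have hw := th_mk_inl x f L h0
  constructor
  · intro hnp g k hk hg
    obtain ⟨u', hu', hgu'⟩ := th_mem x f _ _ hw _ hg
    have h1 : (th x f g).right = 1 := by
      have h2 := congrArg (SemidirectProduct.rightHom) hgu'
      rw [map_pow, map_pow, SemidirectProduct.rightHom_inl] at h2
      have h3 := congrArg Multiplicative.toAdd h2
      simp at h3
      rcases h3 with h3 | h3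
      · omega
      · exact h3
    have h2 : th x f g = SemidirectProduct.inl (th x f g).left := by
      ext
      · simp
      · simp [h1]
    set u := (th x f g).left with hu
    have h3 : u ^ k = u' := by
      apply SemidirectProduct.inl_injective (φ := sh A)
      rw [map_pow, ← h2, ← map_pow, hgu']
    rw [← h3] at hu'
    obtain ⟨s, hs⟩ := Nall_fin x f L _ hu'
    have h4 := (stag x f L hG Set.univ μ M hμ hM hbd s).2.2 (by
      intro q
      apply (hG q).T
      rintro ⟨r, n, hn, hr⟩
      obtain ⟨r', hr'⟩ := rwl_root x f hf q L hL h0 hne r n hn hr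
      exact hnp ⟨r', n, hn, hr'⟩) u k hk hs
    refine mem_of_th x f hf _ _ hw ?_ g u (le_Nall x f L s h4) h2
    intro n hn
    have h5 := hF _ (Subgroup.zpow_mem _ (of_mem_FS (show x ∈ {a | a ≠ y} from hxy)) n) hn
    by_contra h6
    exact FreeGroup.of_ne_one x ((IsMulTorsionFree.zpow_eq_one_iff_left h6).1 h5)
  · intro r n hn hr hrN
    obtain ⟨u, hu, hru⟩ := th_mem x f _ _ hw r hrN
    have h1 : FreeGroup.mk (rwl x f 0 L) = u ^ n := by
      apply SemidirectProduct.inl_injective (φ := sh A)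
      rw [map_pow, ← hru, ← map_pow, ← hr, hw]
    obtain ⟨s, hs⟩ := Nall_fin x f L u hu
    have hs' : u ∈ normalClosure (rel x f L '' (insert 0 s : Finset ℚ)) := by
      refine Subgroup.normalClosure_mono (Set.image_mono ?_) hs
      simp
    have h2 := root_word _ (rwl_cyc x f hf 0 L hL h0) u n (by omega) h1
    have h3 : u ∈ FS {b : A × ℚ | μ ≤ b.2 ∧ b.2 ≤ M} := by
      rw [← FreeGroup.mk_toWord (x := u)]
      apply mk_mem_FS
      intro b hb
      apply hbd b _ trivial
      rw [h2]
      simp only [List.mem_flatten, List.mem_replicate]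
      exact ⟨_, ⟨by omega, rfl⟩, hb⟩
    have h4 := (stag x f L hG Set.univ μ M hμ hM hbd (insert 0 s)).2.1 0 (by simp)
      {b : A × ℚ | μ ≤ b.2 ∧ b.2 ≤ M} ?_ ?_ u h3 hs'
    · exact (hG 0).O u n hn h1 h4
    · intro b hb _
      simpa using hb.1
    · intro q hq b hb _
      have := hb.2
      linarith

theorem wt_comb (f₁ f₂ : A → ℚ) (c : ℚ) (L : List (A × Bool)) :
    wt (fun a => f₁ a + c * f₂ a) L = wt f₁ L + c * wt f₂ L := by
  induction L with
  | nil => simp [wt]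
  | cons l L ih =>
    simp only [wt, ih, lw]
    split_ifs <;> ring

/-- The exponent sum weight. -/
def ind (y : A) : A → ℚ := fun a => if a = y then 1 else 0

theorem exists_weight (x y : A) (hxy : x ≠ y) (L : List (A × Bool)) (h : wt (ind y) L ≠ 0) :
    ∃ f : A → ℚ, f x = 1 ∧ wt f L = 0 := by
  refine ⟨fun a => ind x a + (-(wt (ind x) L / wt (ind y) L)) * ind y a, ?_, ?_⟩
  · simp [ind, hxy]
  · rw [wt_comb]
    field_simp
    ring

theorem good_step (L : List (A × Bool)) (hL : FreeGroup.IsCyclicallyReduced L)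
    (x₀ y₀ : A) (hxy : x₀ ≠ y₀) (hx₀ : ∃ l ∈ L, l.1 = x₀) (hy₀ : ∃ l ∈ L, l.1 = y₀)
    (hG : ∀ (x y : A) (f : A → ℚ), x ≠ y → f x = 1 → wt f L = 0 → (∃ l ∈ L, l.1 = x) →
      (∃ l ∈ L, l.1 = y) → ∀ q, Good (rwl x f q L)) : Good L := by
  have hF : ∀ b, (∃ l ∈ L, l.1 = b) → ∀ g ∈ FS {a | a ≠ b},
      g ∈ normalClosure {FreeGroup.mk L} → g = 1 := by
    intro y hy
    obtain ⟨x, hxy', hx⟩ : ∃ x, x ≠ y ∧ ∃ l ∈ L, l.1 = x := by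
      by_cases h : x₀ = y
      · exact ⟨y₀, by rw [← h]; exact hxy.symm, hy₀⟩
      · exact ⟨x₀, h, hx₀⟩
    by_cases h : wt (ind y) L = 0
    · have h1 : ind y y = 1 := by simp [ind]
      apply free_case_zero y (ind y) h1 (fun a ha => by simp [ind, ha]) L hL h hy
      · obtain ⟨l, hl, rfl⟩ := hx
        exact ⟨l, hl, hxy'⟩
      · exact hG y x (ind y) hxy'.symm h1 h hy hx
    · obtain ⟨f, hf, h0⟩ := exists_weight x y hxy' L h
      exact free_case x y hxy' f hf L h0 hy (hG x y f hxy' hf h0 hx hy)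
  obtain ⟨x, y, f, hxy', hf, h0, hx, hy⟩ : ∃ (x y : A) (f : A → ℚ), x ≠ y ∧ f x = 1 ∧
      wt f L = 0 ∧ (∃ l ∈ L, l.1 = x) ∧ (∃ l ∈ L, l.1 = y) := by
    by_cases h : wt (ind y₀) L = 0
    · exact ⟨y₀, x₀, ind y₀, hxy.symm, by simp [ind], h, hy₀, hx₀⟩
    · obtain ⟨f, hf, h0⟩ := exists_weight x₀ y₀ hxy L h
      exact ⟨x₀, y₀, f, hxy, hf, h0, hx₀, hy₀⟩
  obtain ⟨hT, hO⟩ := tors_case x y hxy' f hf L hL h0 hy (hG x y f hxy' hf h0 hx hy) (hF y hy)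
  exact ⟨hF, hT, hO⟩

theorem good (n : ℕ) : ∀ (A : Type u) (L : List (A × Bool)), L.length < n →
    FreeGroup.IsCyclicallyReduced L → L ≠ [] → Good L := by
  classical
  induction n with
  | zero => intro A L h; omega
  | succ n ih =>
    intro A L hn hL hne
    obtain ⟨l, hl⟩ := List.exists_mem_of_ne_nil L hne
    by_cases h : ∀ m ∈ L, m.1 = l.1
    · exact good_base l.1 L hL.1 hne h
    · push Not at h
      obtain ⟨m, hm, hml⟩ := h
      refine good_step L hL m.1 l.1 hml ⟨m, hm, rfl⟩ ⟨l, hl, rfl⟩ ?_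
      rintro x y f hxy hf h0 ⟨a, ha, hax⟩ ⟨b, hb, hby⟩ q
      apply ih
      · have := rwl_length_lt x f q L a ha hax
        omega
      · exact rwl_cyc x f hf q L hL h0
      · obtain ⟨c, hc, -⟩ := rwl_occ x f q L b hb (by rw [hby]; exact hxy.symm)
        exact List.ne_nil_of_mem hc

end Main

end OneRel

/-- **Karrass–Magnus–Solitar (1960), torsion criterion:** the one-relator group
`⟨A ∣ w = 1⟩` has a nontrivial element of finite order if and only if `w` is a
proper power. -/
theorem one_relator_torsion_iff_proper_power {A : Type*} [DecidableEq A]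
    (w : FreeGroup A) (hw : w ≠ 1) (hcyc : FreeGroup.CyclicallyReduced w) :
    (∃ g : PresentedGroup ({w} : Set (FreeGroup A)),
        g ≠ 1 ∧ ∃ k : ℕ, 1 ≤ k ∧ g ^ k = 1) ↔
      ∃ (r : FreeGroup A) (n : ℕ), 2 ≤ n ∧ w = r ^ n := by
  classical
  have hne : w.toWord ≠ [] := fun h => hw (FreeGroup.toWord_eq_nil_iff.1 h)
  have hL : FreeGroup.IsCyclicallyReduced w.toWord := by
    refine ⟨FreeGroup.isReduced_toWord, ?_⟩
    intro a ha b hb hab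
    by_contra h
    apply hcyc b hb
    rw [Option.mem_def] at ha
    rw [ha]
    congr 1
    ext
    · exact hab
    · revert h
      cases a.2 <;> cases b.2 <;> simp
  have hgood := OneRel.good _ A w.toWord (Nat.lt_succ_self _) hL hne
  obtain ⟨-, hT, hO⟩ := hgood
  rw [FreeGroup.mk_toWord] at hT hO
  constructor
  · rintro ⟨g, hg, k, hk, hgk⟩
    by_contra hnp
    obtain ⟨g, rfl⟩ := QuotientGroup.mk_surjective g
    exact hg ((QuotientGroup.eq_one_iff g).2 (hT hnp g k hk ((QuotientGroup.eq_one_iff (g ^ k)).1 hgk)))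
  · rintro ⟨r, n, hn, hr⟩
    refine ⟨PresentedGroup.mk {w} r, ?_, n, by omega, ?_⟩
    · intro h
      exact hO r n hn hr ((QuotientGroup.eq_one_iff r).1 h)
    · rw [← map_pow, ← hr]
      exact (QuotientGroup.eq_one_iff w).2 (Subgroup.subset_normalClosure rfl)
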